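/- Let G be a connected bipartite finite simple graph on vertex set V = {v_1,...,v_n} with bipartition (V_1, V_2). Then there exist a finite family A_1,...,A_r of proper subsets of V_1 and a subset I ⊆ {i : v_i ∈ V_2}, unique as a pair, such that the edge cone satisfies R+A = aff(R+A) ∩ (∩_{k=1}^r H_{A_k}^-) ∩ (∩_{i ∈ I} {x ∈ R^n : x_i ≥ 0}), where aff(R+A) is the affine hull of the edge cone, and this representation is irreducible: omitting any single halfspace H_{A_k}^- or {x_i ≥ 0} from the intersection yields a set strictly larger than R+A. -/

import Mathlib

open Finset

/-- The edge vector `e_i + e_j` associated to an edge `{i, j}`. -/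
def edgeVector {V : Type*} [DecidableEq V] (i j : V) : V → ℝ :=
  fun k => (if k = i then 1 else 0) + (if k = j then 1 else 0)

/-- The edge cone of a graph `G`: all nonnegative real linear combinations of the
edge vectors of `G`. -/
def edgeCone {V : Type*} [Fintype V] [DecidableEq V] (G : SimpleGraph V) :
    Set (V → ℝ) :=
  { x | ∃ c : V → V → ℝ, (∀ i j, 0 ≤ c i j) ∧ (∀ i j, ¬ G.Adj i j → c i j = 0) ∧
        x = ∑ i, ∑ j, c i j • edgeVector i j }

/-- The neighbor set `N(A)`: vertices adjacent to at least one vertex of `A`. -/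
def nbr {V : Type*} [Fintype V] [DecidableEq V] (G : SimpleGraph V)
    [DecidableRel G.Adj] (A : Finset V) : Finset V :=
  Finset.univ.filter fun v => ∃ a ∈ A, G.Adj v a

/-- `A` is an independent set of vertices of `G`. -/
def IsIndep {V : Type*} (G : SimpleGraph V) (A : Finset V) : Prop :=
  ∀ a ∈ A, ∀ b ∈ A, ¬ G.Adj a b

/-- `F` is a face of the cone `Q`: `F = Q ∩ {x | ⟪x, a⟫ = 0}` for some `a` with
`Q ⊆ {x | ⟪x, a⟫ ≤ 0}`. -/
def IsFace {V : Type*} [Fintype V] (Q F : Set (V → ℝ)) : Prop :=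
  ∃ a : V → ℝ, (∀ x ∈ Q, ∑ i, x i * a i ≤ 0) ∧ F = Q ∩ {x | ∑ i, x i * a i = 0}

/-- `F` is a facet of the cone `Q`: a face whose linear span has dimension one less
than the dimension of the linear span of `Q`. -/
def IsFacet {V : Type*} [Fintype V] (Q F : Set (V → ℝ)) : Prop :=
  IsFace Q F ∧
    Module.finrank ℝ (Submodule.span ℝ F) = Module.finrank ℝ (Submodule.span ℝ Q) - 1

/-!
Dually, the edge cone consists of the `x` with `0 ≤ ∑ i, y i * x i` for every `y` such that
`0 ≤ y i + y j` on all edges. For such a `y` each neighbor of `{i ∈ V₁ | r < -y i}` lies in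
`{j ∈ V₂ | r < y j}`, so summing the inequalities `x(A) ≤ x(N(A))` over the levels `r` yields
exactly `0 ≤ ∑ i, y i * x i`; hence these inequalities together with `0 ≤ x i` on `V₂` cut the cone
out of its span, where `x(V₁) = x(V₂)`, and a minimal subfamily exists.

Uniqueness holds because an irredundant halfspace has a point of the cone lying on its boundary and
in the interior of all the others. Any other representation must then contain a halfspace whose
functional is a positive multiple of the given one on the cone, and connectedness of the graph makes
distinct halfspaces of our family nonproportional.
-/

section HalfspaceRepresentation

variable {𝕜 E K : Type*} [Field 𝕜] [LinearOrder 𝕜] [AddCommGroup E] [Module 𝕜 E]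

/-- The polyhedral cone cut out of the subspace `W` by the halfspaces `0 ≤ F k`, `k ∈ S`. -/
def halfspaceCone (W : Submodule 𝕜 E) (F : K → Module.Dual 𝕜 E) (S : Finset K) : Set E :=
  {x | x ∈ W ∧ ∀ k ∈ S, 0 ≤ F k x}

theorem halfspaceCone_anti {W : Submodule 𝕜 E} {F : K → Module.Dual 𝕜 E} {S T : Finset K}
    (h : S ⊆ T) : halfspaceCone W F T ⊆ halfspaceCone W F S :=
  fun _ hx => ⟨hx.1, fun k hk => hx.2 k (h hk)⟩

/-- `C` is cut out of its linear span by the halfspaces `0 ≤ F k`, `k ∈ S`, none of which can be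
omitted. -/
structure IsIrredundantRep [DecidableEq K] (C : Set E) (F : K → Module.Dual 𝕜 E)
    (S : Finset K) : Prop where
  eq_halfspaceCone : C = halfspaceCone (Submodule.span 𝕜 C) F S
  ne_erase : ∀ k ∈ S, C ≠ halfspaceCone (Submodule.span 𝕜 C) F (S.erase k)

theorem IsIrredundantRep.nonneg [DecidableEq K] {C : Set E} {F : K → Module.Dual 𝕜 E}
    {S : Finset K} {k : K} (h : IsIrredundantRep C F S) (hk : k ∈ S) {x : E} (hx : x ∈ C) :
    0 ≤ F k x :=
  (h.eq_halfspaceCone.subset hx).2 k hk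

theorem IsIrredundantRep.exists_neg [DecidableEq K] {C : Set E} {F : K → Module.Dual 𝕜 E}
    {S : Finset K} {k : K} (h : IsIrredundantRep C F S) (hk : k ∈ S) :
    ∃ z ∈ Submodule.span 𝕜 C, (∀ j ∈ S.erase k, 0 ≤ F j z) ∧ F k z < 0 := by
  by_contra! hpos
  refine h.ne_erase k hk (Set.Subset.antisymm ?_ fun z hz => ?_)
  · exact h.eq_halfspaceCone.subset.trans (halfspaceCone_anti (erase_subset k S))
  · rw [h.eq_halfspaceCone, ← insert_erase hk]
    exact ⟨hz.1, forall_mem_insert _ _ _ |>.2 ⟨hpos z hz.1 hz.2, hz.2⟩⟩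

theorem IsIrredundantRep.not_eqOn_zero [DecidableEq K] {C : Set E} {F : K → Module.Dual 𝕜 E}
    {S : Finset K} {k : K} (h : IsIrredundantRep C F S) (hk : k ∈ S) : ¬ Set.EqOn (F k) 0 C := by
  intro h0
  obtain ⟨z, hz, -, hneg⟩ := h.exists_neg hk
  exact hneg.ne (LinearMap.eqOn_span (g := 0) h0 hz)

variable [IsStrictOrderedRing 𝕜]

theorem exists_pos_forall_pos_add_mul (T : Finset K) {a : K → 𝕜} (b : K → 𝕜)
    (ha : ∀ k ∈ T, 0 < a k) : ∃ ε > 0, ∀ k ∈ T, 0 < a k + ε * b k := by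
  have hb (k : K) : 0 < 1 + |b k| := by positivity
  obtain ⟨ε, hε, h⟩ := Pi.exists_forall_pos_add_lt
    (x := fun _ : T => (0 : 𝕜)) (y := fun k => a k / (1 + |b k|))
    fun k => div_pos (ha k k.2) (hb k)
  refine ⟨ε, hε, fun k hk => ?_⟩
  have hlt : ε * (1 + |b k|) < a k := by
    simpa only [zero_add, lt_div_iff₀ (hb k)] using h ⟨k, hk⟩
  have hle : ε * -b k ≤ ε * |b k| := by gcongr; exact neg_le_abs (b k)
  linarith

theorem exists_mem_halfspaceCone_forall_pos {C : Set E} {F : K → Module.Dual 𝕜 E} {S : Finset K}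
    (hC : C = halfspaceCone (Submodule.span 𝕜 C) F S) :
    ∃ p ∈ C, ∀ k ∈ S, ¬ Set.EqOn (F k) 0 C → 0 < F k p := by
  have hnonneg {k : K} (hk : k ∈ S) {x : E} (hx : x ∈ C) : 0 ≤ F k x := (hC.subset hx).2 k hk
  have hzero : 0 ∈ C := by rw [hC]; exact ⟨zero_mem _, fun k _ => (map_zero (F k)).ge⟩
  have hpos (k : K) : ∃ x ∈ C, k ∈ S → ¬ Set.EqOn (F k) 0 C → 0 < F k x := by
    by_cases h : k ∈ S ∧ ¬ Set.EqOn (F k) 0 C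
    · obtain ⟨x, hx, hne⟩ : ∃ x ∈ C, F k x ≠ 0 := by simpa [Set.EqOn] using h.2
      exact ⟨x, hx, fun hk _ => (hnonneg hk hx).lt_of_ne' hne⟩
    · exact ⟨0, hzero, fun hk h0 => (h ⟨hk, h0⟩).elim⟩
  choose x hx hxpos using hpos
  refine ⟨∑ k ∈ S, x k, ?_, fun k hk h0 => ?_⟩
  · rw [hC]
    refine ⟨sum_mem fun k _ => Submodule.subset_span (hx k), fun j hj => ?_⟩
    rw [map_sum]
    exact sum_nonneg fun k _ => hnonneg hj (hx k)
  · rw [map_sum]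
    exact (hxpos k hk h0).trans_le
      (single_le_sum (f := fun l => F k (x l)) (fun l _ => hnonneg hk (hx l)) hk)

namespace IsIrredundantRep

variable [DecidableEq K] {C : Set E} {F : K → Module.Dual 𝕜 E} {S : Finset K} {k : K}

theorem exists_mem_facet (h : IsIrredundantRep C F S) (hk : k ∈ S) :
    ∃ q ∈ C, F k q = 0 ∧ ∀ j ∈ S.erase k, 0 < F j q := by
  obtain ⟨p, hpC, hp⟩ := exists_mem_halfspaceCone_forall_pos h.eq_halfspaceCone
  obtain ⟨z, hzW, hz, hkz⟩ := h.exists_neg hk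
  have hkp := hp k hk (h.not_eqOn_zero hk)
  have hkq : F k (-F k z • p + F k p • z) = 0 := by
    simp only [map_add, map_smul, smul_eq_mul]; ring
  have hjq : ∀ j ∈ S.erase k, 0 < F j (-F k z • p + F k p • z) := fun j hj => by
    simp only [map_add, map_smul, smul_eq_mul]
    have hjS := mem_of_mem_erase hj
    exact add_pos_of_pos_of_nonneg (mul_pos (neg_pos.2 hkz) (hp j hjS (h.not_eqOn_zero hjS)))
      (mul_nonneg hkp.le (hz j hj))
  refine ⟨_, ?_, hkq, hjq⟩
  rw [h.eq_halfspaceCone, ← insert_erase hk]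
  refine ⟨add_mem (Submodule.smul_mem _ _ (Submodule.subset_span hpC))
    (Submodule.smul_mem _ _ hzW), ?_⟩
  exact forall_mem_insert _ _ _ |>.2 ⟨hkq.ge, fun j hj => (hjq j hj).le⟩

-- A facet point `q` can be moved a little in every direction of `span C ∩ ker (F k)` without
-- leaving `C`, and `f` must not become negative along the way.
theorem eq_zero_of_nonneg (h : IsIrredundantRep C F S) (hk : k ∈ S) {f : Module.Dual 𝕜 E}
    (hf : ∀ x ∈ C, 0 ≤ f x) {q : E} (hq : q ∈ C) (hkq : F k q = 0)
    (hjq : ∀ j ∈ S.erase k, 0 < F j q) (hfq : f q = 0) {y : E} (hy : y ∈ Submodule.span 𝕜 C)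
    (hky : F k y = 0) : f y = 0 := by
  have hle : ∀ v ∈ Submodule.span 𝕜 C, F k v = 0 → 0 ≤ f v := by
    intro v hv hkv
    obtain ⟨ε, hε, hpos⟩ := exists_pos_forall_pos_add_mul (S.erase k) (fun j => F j v) hjq
    have hmem : q + ε • v ∈ C := by
      rw [h.eq_halfspaceCone, ← insert_erase hk]
      refine ⟨add_mem (Submodule.subset_span hq) (Submodule.smul_mem _ _ hv), ?_⟩
      simp only [forall_mem_insert, map_add, map_smul, smul_eq_mul]
      exact ⟨by rw [hkq, hkv, mul_zero, add_zero], fun j hj => (hpos j hj).le⟩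
    have hfv : 0 ≤ ε * f v := by
      simpa only [map_add, map_smul, smul_eq_mul, hfq, zero_add] using hf _ hmem
    exact nonneg_of_mul_nonneg_right hfv hε
  have hneg : 0 ≤ -f y := by
    simpa only [map_neg] using hle (-y) (neg_mem hy) (by rw [map_neg, hky, neg_zero])
  exact le_antisymm (neg_nonneg.1 hneg) (hle y hy hky)

theorem exists_eqOn_smul (h : IsIrredundantRep C F S) (hk : k ∈ S) {f : Module.Dual 𝕜 E}
    (hf : ∀ x ∈ C, 0 ≤ f x) (hf0 : ¬ Set.EqOn f 0 C) {q : E} (hq : q ∈ C) (hkq : F k q = 0)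
    (hjq : ∀ j ∈ S.erase k, 0 < F j q) (hfq : f q = 0) : ∃ c > (0 : 𝕜), Set.EqOn f (c • F k) C := by
  obtain ⟨p, hp, hne⟩ : ∃ p ∈ C, F k p ≠ 0 := by
    simpa [Set.EqOn] using h.not_eqOn_zero hk
  have hkp : 0 < F k p := (h.nonneg hk hp).lt_of_ne' hne
  have hfk : Set.EqOn f ((f p / F k p) • F k) C := fun x hx => by
    have hzero : f (F k p • x - F k x • p) = 0 := by
      refine h.eq_zero_of_nonneg hk hf hq hkq hjq hfq ?_ ?_
      · exact sub_mem (Submodule.smul_mem _ _ (Submodule.subset_span hx))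
          (Submodule.smul_mem _ _ (Submodule.subset_span hp))
      · simp only [map_sub, map_smul, smul_eq_mul]; ring
    simp only [map_sub, map_smul, smul_eq_mul, sub_eq_zero] at hzero
    simp only [Pi.smul_apply, smul_eq_mul]
    field_simp
    linarith
  have hfp : f p ≠ 0 := fun h0 => hf0 fun x hx => by simp [hfk hx, h0]
  exact ⟨_, div_pos ((hf p hp).lt_of_ne' hfp) hkp, hfk⟩

theorem exists_mem_eqOn_smul (h : IsIrredundantRep C F S) (hk : k ∈ S) {T : Finset K}
    (hT : C = halfspaceCone (Submodule.span 𝕜 C) F T) :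
    ∃ l ∈ T, ∃ c > (0 : 𝕜), Set.EqOn (F l) (c • F k) C := by
  have hnonneg : ∀ l ∈ T, ∀ x ∈ C, 0 ≤ F l x := fun l hl x hx => (hT.subset hx).2 l hl
  obtain ⟨q, hq, hkq, hjq⟩ := h.exists_mem_facet hk
  obtain ⟨l, hl, hl0, hlq⟩ : ∃ l ∈ T, ¬ Set.EqOn (F l) 0 C ∧ F l q = 0 := by
    by_contra! hne
    obtain ⟨z, hz, -, hkz⟩ := h.exists_neg hk
    classical
    obtain ⟨ε, hε, hpos⟩ := exists_pos_forall_pos_add_mul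
      (T.filter fun l => ¬ Set.EqOn (F l) 0 C) (a := fun l => F l q) (fun l => F l z)
      fun l hl => by
        rw [mem_filter] at hl
        exact (hnonneg l hl.1 q hq).lt_of_ne' (hne l hl.1 hl.2)
    have hmem : q + ε • z ∈ C := by
      rw [hT]
      refine ⟨add_mem (Submodule.subset_span hq) (Submodule.smul_mem _ _ hz), fun l hl => ?_⟩
      rw [map_add, map_smul, smul_eq_mul]
      by_cases hl0 : Set.EqOn (F l) 0 C
      · have hlz : F l z = 0 := LinearMap.eqOn_span (g := 0) hl0 hz
        rw [hlz, mul_zero, add_zero]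
        exact hnonneg l hl q hq
      · exact (hpos l (mem_filter.2 ⟨hl, hl0⟩)).le
    have hkε := h.nonneg hk hmem
    rw [map_add, map_smul, smul_eq_mul, hkq, zero_add] at hkε
    exact hkε.not_gt (mul_neg_of_pos_of_neg hε hkz)
  exact ⟨l, hl, h.exists_eqOn_smul hk (hnonneg l hl) hl0 hq hkq hjq hlq⟩

end IsIrredundantRep

theorem existsUnique_isIrredundantRep [DecidableEq K] {C : Set E} {F : K → Module.Dual 𝕜 E}
    {T : Finset K} (hC : C = halfspaceCone (Submodule.span 𝕜 C) F T)
    (hF : ∀ k ∈ T, ∀ l ∈ T, ∀ c > (0 : 𝕜), Set.EqOn (F l) (c • F k) C →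
      ¬ Set.EqOn (F k) 0 C → k = l) :
    ∃! S, S ⊆ T ∧ IsIrredundantRep C F S := by
  have subset {S S' : Finset K} (hST : S ⊆ T) (hS'T : S' ⊆ T) (hS : IsIrredundantRep C F S)
      (hS' : IsIrredundantRep C F S') : S ⊆ S' := fun k hk => by
    obtain ⟨l, hl, c, hc, hlk⟩ := hS.exists_mem_eqOn_smul hk hS'.eq_halfspaceCone
    rwa [hF k (hST hk) l (hS'T hl) c hc hlk (hS.not_eqOn_zero hk)]
  obtain ⟨S, hST, hS⟩ := exists_minimal_le_of_wellFoundedLT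
    (fun S => C = halfspaceCone (Submodule.span 𝕜 C) F S) T hC
  have hirr : IsIrredundantRep C F S :=
    ⟨hS.prop, fun k hk => hS.not_prop_of_lt (erase_ssubset hk)⟩
  exact ⟨S, ⟨hST, hirr⟩, fun S' hS' =>
    (subset hS'.1 hST hS'.2 hirr).antisymm (subset hST hS'.1 hirr hS'.2)⟩

end HalfspaceRepresentation

-- Fourier–Motzkin elimination of one generator at a time.
theorem mem_hull_image_of_forall_dual_nonneg {𝕜 E ι : Type*} [Field 𝕜] [LinearOrder 𝕜]
    [IsStrictOrderedRing 𝕜] [AddCommGroup E] [Module 𝕜 E] (s : Finset ι) (a : ι → E) {b : E}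
    (h : ∀ f : Module.Dual 𝕜 E, (∀ i ∈ s, 0 ≤ f (a i)) → 0 ≤ f b) :
    b ∈ PointedCone.hull 𝕜 (a '' s) := by
  classical
  induction s using Finset.induction generalizing a b with
  | empty =>
    have hb : b = 0 := (Module.forall_dual_apply_eq_zero_iff 𝕜 b).1 fun f =>
      le_antisymm (by simpa using h (-f) (by simp)) (h f (by simp))
    exact hb ▸ zero_mem _
  | insert j s _ ih =>
    rw [coe_insert, Set.image_insert_eq]
    by_cases hs : ∀ f : Module.Dual 𝕜 E, (∀ i ∈ s, 0 ≤ f (a i)) → 0 ≤ f b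
    · exact Submodule.span_mono (Set.subset_insert _ _) (ih a hs)
    obtain ⟨g, hg, hgj, hgb⟩ : ∃ g : Module.Dual 𝕜 E,
        (∀ i ∈ s, 0 ≤ g (a i)) ∧ g (a j) = -1 ∧ g b ≤ 0 := by
      push Not at hs
      obtain ⟨f, hf, hfb⟩ := hs
      have hfj : f (a j) < 0 := by
        by_contra! hfj
        exact (h f ((forall_mem_insert _ _ _).2 ⟨hfj, hf⟩)).not_gt hfb
      have hr : 0 ≤ -(f (a j))⁻¹ := neg_nonneg.2 (inv_nonpos.2 hfj.le)
      refine ⟨-(f (a j))⁻¹ • f, fun i hi => mul_nonneg hr (hf i hi), ?_,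
        mul_nonpos_of_nonneg_of_nonpos hr hfb.le⟩
      rw [LinearMap.smul_apply, smul_eq_mul, neg_mul, inv_mul_cancel₀ hfj.ne]
    have hproj : b + g b • a j ∈ PointedCone.hull 𝕜 ((fun i => a i + g (a i) • a j) '' s) := by
      refine ih _ fun f hf => ?_
      have hfb := h (f + f (a j) • g) <| (forall_mem_insert _ _ _).2
        ⟨by simp [hgj], fun i hi => by simpa [mul_comm] using hf i hi⟩
      simpa [mul_comm] using hfb
    have haj : a j ∈ PointedCone.hull 𝕜 (insert (a j) (a '' s)) :=
      Submodule.subset_span (Set.mem_insert _ _)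
    have hle : PointedCone.hull 𝕜 ((fun i => a i + g (a i) • a j) '' s) ≤
        PointedCone.hull 𝕜 (insert (a j) (a '' s)) := by
      refine Submodule.span_le.2 (Set.image_subset_iff.2 fun i hi => ?_)
      exact add_mem (Submodule.subset_span (Set.mem_insert_of_mem _ (Set.mem_image_of_mem a hi)))
        (PointedCone.smul_mem _ (hg i hi) haj)
    have hadd := add_mem (hle hproj) (PointedCone.smul_mem _ (neg_nonneg.2 hgb) haj)
    rwa [neg_smul, add_neg_cancel_right] at hadd

-- Layer by layer: the lowest level of `f` is peeled off.
theorem mul_sum_le_sum_mul_of_forall_sum_filter_nonneg {𝕜 ι : Type*} [CommRing 𝕜] [LinearOrder 𝕜]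
    [IsStrictOrderedRing 𝕜] (s : Finset ι) (w f : ι → 𝕜) {m : 𝕜} (hm : ∀ i ∈ s, m < f i)
    (hw : ∀ t, 0 ≤ ∑ i ∈ s with t < f i, w i) : m * ∑ i ∈ s, w i ≤ ∑ i ∈ s, w i * f i := by
  induction s using Finset.strongInduction generalizing m with | H s ih
  obtain rfl | hs := s.eq_empty_or_nonempty
  · simp
  obtain ⟨a, ha, hmin⟩ := s.exists_min_image f hs
  have hsum : 0 ≤ ∑ i ∈ s, w i := by simpa only [filter_true_of_mem hm] using hw m
  have hlevel : ∑ i ∈ s with ¬ f a < f i, w i * f i = f a * ∑ i ∈ s with ¬ f a < f i, w i := by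
    rw [mul_sum]
    refine sum_congr rfl fun i hi => ?_
    rw [mem_filter, not_lt] at hi
    rw [hi.2.antisymm (hmin i hi.1), mul_comm]
  have hupper : f a * ∑ i ∈ s with f a < f i, w i ≤ ∑ i ∈ s with f a < f i, w i * f i := by
    have hlt : s.filter (f a < f ·) ⊂ s := filter_ssubset.2 ⟨a, ha, lt_irrefl _⟩
    refine ih _ hlt (fun i hi => (mem_filter.1 hi).2) fun t => ?_
    simpa only [filter_filter, ← max_lt_iff] using hw (max (f a) t)
  calc m * ∑ i ∈ s, w i ≤ f a * ∑ i ∈ s, w i := by gcongr; exact (hm a ha).le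
    _ = f a * ∑ i ∈ s with f a < f i, w i + f a * ∑ i ∈ s with ¬ f a < f i, w i := by
      rw [← mul_add, sum_filter_add_sum_filter_not]
    _ ≤ ∑ i ∈ s with f a < f i, w i * f i + ∑ i ∈ s with ¬ f a < f i, w i * f i := by
      rw [hlevel]; gcongr
    _ = ∑ i ∈ s, w i * f i := sum_filter_add_sum_filter_not _ _ _

theorem sum_mul_le_sum_mul_of_forall_sum_filter_le {𝕜 ι κ : Type*} [CommRing 𝕜] [LinearOrder 𝕜]
    [IsStrictOrderedRing 𝕜] {s : Finset ι} {t : Finset κ} {u f : ι → 𝕜} {v g : κ → 𝕜}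
    (hle : ∀ r, ∑ i ∈ s with r < f i, u i ≤ ∑ j ∈ t with r < g j, v j)
    (heq : ∑ i ∈ s, u i = ∑ j ∈ t, v j) : ∑ i ∈ s, u i * f i ≤ ∑ j ∈ t, v j * g j := by
  obtain ⟨m, hm⟩ : ∃ m, ∀ k ∈ s.disjSum t, m < Sum.elim f g k := by
    obtain ⟨m, hm⟩ := ((s.disjSum t).image (Sum.elim f g)).bddBelow
    exact ⟨m - 1, fun k hk => (sub_one_lt m).trans_le (hm (mem_image_of_mem _ hk))⟩
  have key := mul_sum_le_sum_mul_of_forall_sum_filter_nonneg (s.disjSum t)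
    (Sum.elim (-u) v) (Sum.elim f g) hm fun r => by
      have hr := hle r
      rw [← sub_nonneg, ← neg_add_eq_sub, ← sum_neg_distrib] at hr
      rw [sum_filter, sum_filter] at hr
      rwa [sum_filter, sum_disjSum]
  simpa [sum_disjSum, heq] using key

section EdgeCone

theorem edgeVector_eq_single_add_single {V : Type*} [DecidableEq V] (i j : V) :
    edgeVector i j = Pi.single i 1 + Pi.single j 1 := by
  ext k
  simp only [edgeVector, Pi.add_apply, Pi.single_apply]

theorem sum_edgeVector {V : Type*} [DecidableEq V] (A : Finset V) (i j : V) :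
    ∑ k ∈ A, edgeVector i j k = (if i ∈ A then 1 else 0) + (if j ∈ A then 1 else 0) := by
  simp only [edgeVector, sum_add_distrib, sum_ite_eq']

theorem exists_edgeVector_eq_of_isBipartiteWith {V : Type*} [DecidableEq V] {G : SimpleGraph V}
    {s t : Set V} (hbip : G.IsBipartiteWith s t) {i j : V} (hij : G.Adj i j) :
    ∃ a ∈ s, ∃ b ∈ t, G.Adj a b ∧ edgeVector i j = edgeVector a b := by
  obtain ⟨hi, hj⟩ | ⟨hi, hj⟩ := hbip.mem_of_adj hij
  · exact ⟨i, hi, j, hj, hij, rfl⟩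
  · refine ⟨j, hj, i, hi, hij.symm, ?_⟩
    rw [edgeVector_eq_single_add_single, edgeVector_eq_single_add_single, add_comm]

variable {V : Type*} [Fintype V] [DecidableEq V] {G : SimpleGraph V}

theorem edgeCone_eq_hull (G : SimpleGraph V) [DecidableRel G.Adj] :
    edgeCone G = PointedCone.hull ℝ
      ((fun e : V × V => edgeVector e.1 e.2) '' ({e | G.Adj e.1 e.2} : Finset (V × V))) := by
  ext x
  rw [SetLike.mem_coe, Submodule.mem_span_image_finset_iff_exists_fun']
  simp only [sum_filter, Fintype.sum_prod_type]
  constructor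
  · rintro ⟨c, hc, hadj, rfl⟩
    refine ⟨fun e => ⟨c e.1 e.2, hc e.1 e.2⟩, sum_congr rfl fun i _ => sum_congr rfl fun j _ => ?_⟩
    split_ifs with h
    · rfl
    · rw [hadj i j h, zero_smul]
  · rintro ⟨c, rfl⟩
    refine ⟨fun i j => if G.Adj i j then c (i, j) else 0, fun i j => ?_, fun i j h => if_neg h, ?_⟩
    · dsimp only; split_ifs
      exacts [(c (i, j)).2, le_rfl]
    · simp only [ite_smul, zero_smul]; rfl

theorem span_edgeCone (G : SimpleGraph V) : Submodule.span ℝ (edgeCone G) =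
    Submodule.span ℝ ((fun e : V × V => edgeVector e.1 e.2) '' {e | G.Adj e.1 e.2}) := by
  classical
  rw [edgeCone_eq_hull, Submodule.span_span_of_tower, coe_filter_univ]

theorem mem_edgeCone_of_forall_sum_nonneg {x : V → ℝ}
    (h : ∀ y : V → ℝ, (∀ i j, G.Adj i j → 0 ≤ y i + y j) → 0 ≤ ∑ i, y i * x i) :
    x ∈ edgeCone G := by
  classical
  rw [edgeCone_eq_hull]
  refine mem_hull_image_of_forall_dual_nonneg _ _ fun f hf => ?_
  have hfx (x : V → ℝ) : f x = ∑ i, f (Pi.single i 1) * x i := by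
    conv_lhs => rw [pi_eq_sum_univ' x]
    simp [mul_comm]
  rw [hfx]
  refine h _ fun i j hij => ?_
  rw [← map_add, ← edgeVector_eq_single_add_single]
  exact hf (i, j) (by simpa using hij)

theorem edgeVector_mem_edgeCone {i j : V} (h : G.Adj i j) : edgeVector i j ∈ edgeCone G := by
  classical
  rw [edgeCone_eq_hull]
  exact Submodule.subset_span ⟨(i, j), by simpa using h, rfl⟩

theorem nonneg_of_mem_edgeCone {f : Module.Dual ℝ (V → ℝ)}
    (hf : ∀ i j, G.Adj i j → 0 ≤ f (edgeVector i j)) {x : V → ℝ} (hx : x ∈ edgeCone G) :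
    0 ≤ f x := by
  classical
  rw [edgeCone_eq_hull] at hx
  induction hx using Submodule.span_induction with
  | mem x hx =>
    obtain ⟨e, he, rfl⟩ := hx
    exact hf e.1 e.2 (by simpa using he)
  | zero => exact (map_zero f).ge
  | add x y _ _ hx hy => exact (map_add f x y).symm ▸ add_nonneg hx hy
  | smul c x _ hx => exact (f.map_smul_of_tower c x).symm ▸ smul_nonneg c.2 hx

theorem coe_affineSpan_edgeCone (G : SimpleGraph V) :
    (affineSpan ℝ (edgeCone G) : Set (V → ℝ)) = Submodule.span ℝ (edgeCone G) := by
  classical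
  have hzero : 0 ∈ edgeCone G := by rw [edgeCone_eq_hull]; exact zero_mem _
  rw [← Set.insert_eq_of_mem hzero, affineSpan_insert_zero]
  simp

theorem eqOn_span_edgeCone {f g : Module.Dual ℝ (V → ℝ)}
    (h : ∀ i j, G.Adj i j → f (edgeVector i j) = g (edgeVector i j)) :
    Set.EqOn f g (Submodule.span ℝ (edgeCone G)) := by
  rw [span_edgeCone]
  exact LinearMap.eqOn_span' (by rintro _ ⟨e, he, rfl⟩; exact h _ _ he)

end EdgeCone

section Bipartite

theorem eq_of_forall_adj_add_eq_zero {V M : Type*} [AddGroup M] {G : SimpleGraph V} {s t : Set V}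
    (hG : G.Preconnected) (hbip : G.IsBipartiteWith s t) {d : V → M}
    (hd : ∀ u v, G.Adj u v → d u + d v = 0) {i j : V} (hi : i ∈ s) (hj : j ∈ s) : d i = d j := by
  classical
  let signed (v : V) : M := if v ∈ s then d v else -d v
  have hadj {u v : V} (huv : G.Adj u v) : signed u = signed v := by
    obtain ⟨hu, hv⟩ | ⟨hu, hv⟩ := hbip.mem_of_adj huv
    · simp only [signed, if_pos hu, if_neg (hbip.disjoint.notMem_of_mem_right hv)]
      exact eq_neg_of_add_eq_zero_left (hd u v huv)
    · simp only [signed, if_pos hv, if_neg (hbip.disjoint.notMem_of_mem_right hu)]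
      exact neg_eq_of_add_eq_zero_right (hd u v huv)
  have hwalk {u v : V} (w : G.Walk u v) : signed u = signed v := by
    induction w with
    | nil => rfl
    | cons h _ ih => exact (hadj h).trans ih
  obtain ⟨w⟩ := hG i j
  simpa only [signed, if_pos hi, if_pos hj] using hwalk w

variable {V : Type*} [Fintype V] [DecidableEq V] {G : SimpleGraph V} [DecidableRel G.Adj]
  {V₁ V₂ : Finset V}

theorem mem_nbr {A : Finset V} {v : V} : v ∈ nbr G A ↔ ∃ a ∈ A, G.Adj v a :=
  mem_filter_univ v

theorem nbr_subset_of_isBipartiteWith (hbip : G.IsBipartiteWith (V₁ : Set V) V₂) {A : Finset V}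
    (hA : A ⊆ V₁) : nbr G A ⊆ V₂ := fun v hv => by
  obtain ⟨a, ha, hva⟩ := mem_nbr.1 hv
  exact hbip.mem_of_mem_adj (hA ha) hva.symm

theorem sum_left_eq_sum_of_mem_span_edgeCone (hbip : G.IsBipartiteWith (V₁ : Set V) V₂)
    {T : Finset V} (hT : nbr G V₁ ⊆ T) (hTV : T ⊆ V₂) {x : V → ℝ}
    (hx : x ∈ Submodule.span ℝ (edgeCone G)) : ∑ i ∈ V₁, x i = ∑ i ∈ T, x i := by
  have hdisj := disjoint_coe.1 hbip.disjoint
  have key := eqOn_span_edgeCone (f := ∑ i ∈ V₁, LinearMap.proj i)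
    (g := ∑ i ∈ T, LinearMap.proj i) (fun i j hij => ?_) hx
  · simpa only [LinearMap.sum_apply, LinearMap.proj_apply] using key
  · obtain ⟨i, hi, j, hj, hij, heq⟩ := exists_edgeVector_eq_of_isBipartiteWith hbip hij
    rw [heq]
    have hiT : i ∉ T := fun h => disjoint_left.1 hdisj hi (hTV h)
    have hjT : j ∈ T := hT (mem_nbr.2 ⟨i, hi, hij.symm⟩)
    have hj₁ : j ∉ V₁ := disjoint_right.1 hdisj hj
    rw [mem_coe] at hi
    simp only [LinearMap.sum_apply, LinearMap.proj_apply, sum_edgeVector, hi, hiT, hjT, hj₁,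
      if_true, if_false, add_zero, zero_add]

/-- The linear functionals whose nonnegativity defines the halfspaces of the representation:
`Sum.inl A` stands for `H_A^-` and `Sum.inr i` for `{x | 0 ≤ x i}`. -/
def hallFunctional (G : SimpleGraph V) [DecidableRel G.Adj] :
    Finset V ⊕ V → Module.Dual ℝ (V → ℝ) :=
  Sum.elim (fun A => ∑ i ∈ nbr G A, LinearMap.proj i - ∑ i ∈ A, LinearMap.proj i) LinearMap.proj

theorem hallFunctional_inl_apply (A : Finset V) (x : V → ℝ) :
    hallFunctional G (Sum.inl A) x = ∑ i ∈ nbr G A, x i - ∑ i ∈ A, x i := by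
  simp only [hallFunctional, Sum.elim_inl, LinearMap.sub_apply, LinearMap.sum_apply,
    LinearMap.proj_apply]

theorem hallFunctional_inr_apply (i : V) (x : V → ℝ) : hallFunctional G (Sum.inr i) x = x i :=
  rfl

theorem hallFunctional_nonneg (hbip : G.IsBipartiteWith (V₁ : Set V) V₂) {k : Finset V ⊕ V}
    (hk : k ∈ V₁.ssubsets.disjSum V₂) {x : V → ℝ} (hx : x ∈ edgeCone G) :
    0 ≤ hallFunctional G k x := by
  refine nonneg_of_mem_edgeCone (fun i j hij => ?_) hx
  obtain ⟨i, -, j, hj, hij, heq⟩ := exists_edgeVector_eq_of_isBipartiteWith hbip hij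
  rw [heq]
  obtain ⟨A, hA, rfl⟩ | ⟨m, -, rfl⟩ := mem_disjSum.1 hk
  · have hjA : j ∉ A := fun h =>
      disjoint_left.1 (disjoint_coe.1 hbip.disjoint) ((mem_ssubsets.1 hA).subset h) hj
    have hnbr : i ∈ A → j ∈ nbr G A := fun h => mem_nbr.2 ⟨i, h, hij.symm⟩
    rw [hallFunctional_inl_apply, sum_edgeVector, sum_edgeVector, if_neg hjA, add_zero, sub_nonneg]
    by_cases hiA : i ∈ A
    · rw [if_pos hiA, if_pos (hnbr hiA)]
      exact le_add_of_nonneg_left (by positivity)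
    · rw [if_neg hiA]
      positivity
  · rw [hallFunctional_inr_apply, edgeVector]
    positivity

theorem mem_edgeCone_of_forall_sum_le_sum_nbr (hbip : G.IsBipartiteWith (V₁ : Set V) V₂)
    (hunion : V₁ ∪ V₂ = univ) {x : V → ℝ} (hsum : ∑ i ∈ V₁, x i = ∑ i ∈ V₂, x i)
    (hle : ∀ A ⊆ V₁, ∑ i ∈ A, x i ≤ ∑ i ∈ nbr G A, x i) (hnonneg : ∀ i ∈ V₂, 0 ≤ x i) :
    x ∈ edgeCone G := by
  refine mem_edgeCone_of_forall_sum_nonneg fun y hy => ?_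
  have hlayer (r : ℝ) : ∑ i ∈ V₁ with r < -y i, x i ≤ ∑ j ∈ V₂ with r < y j, x j := by
    have hsub : V₁.filter (r < -y ·) ⊆ V₁ := filter_subset _ _
    refine (hle _ hsub).trans (sum_le_sum_of_subset_of_nonneg (fun j hj => ?_) fun j hj _ => ?_)
    · obtain ⟨i, hi, hji⟩ := mem_nbr.1 hj
      refine mem_filter.2 ⟨nbr_subset_of_isBipartiteWith hbip hsub hj, ?_⟩
      linarith [hy j i hji, (mem_filter.1 hi).2]
    · exact hnonneg j (mem_filter.1 hj).1
  have hdual := sum_mul_le_sum_mul_of_forall_sum_filter_le hlayer hsum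
  rw [← hunion, sum_union (disjoint_coe.1 hbip.disjoint)]
  simp only [mul_comm (x _), neg_mul, sum_neg_distrib] at hdual
  linarith

theorem edgeCone_eq_halfspaceCone (hbip : G.IsBipartiteWith (V₁ : Set V) V₂)
    (hunion : V₁ ∪ V₂ = univ) : edgeCone G = halfspaceCone (Submodule.span ℝ (edgeCone G))
      (hallFunctional G) (V₁.ssubsets.disjSum V₂) := by
  refine Set.Subset.antisymm (fun x hx => ⟨Submodule.subset_span hx, fun k hk =>
    hallFunctional_nonneg hbip hk hx⟩) fun x ⟨hx, hpos⟩ => ?_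
  have hnbr : nbr G V₁ ⊆ V₂ := nbr_subset_of_isBipartiteWith hbip subset_rfl
  refine mem_edgeCone_of_forall_sum_le_sum_nbr hbip hunion
    (sum_left_eq_sum_of_mem_span_edgeCone hbip hnbr subset_rfl hx) (fun A hA => ?_) fun i hi => ?_
  · obtain rfl | hA := hA.eq_or_ssubset
    · exact (sum_left_eq_sum_of_mem_span_edgeCone hbip subset_rfl hnbr hx).le
    · have hAx := hpos (Sum.inl A) (inl_mem_disjSum.2 (mem_ssubsets.2 hA))
      rwa [hallFunctional_inl_apply, sub_nonneg] at hAx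
  · exact hpos (Sum.inr i) (inr_mem_disjSum.2 hi)

/-- The part of the support of `hallFunctional G k` lying in the class `V₁`. -/
def leftSupport : Finset V ⊕ V → Finset V :=
  Sum.elim id fun _ => ∅

theorem hallFunctional_single_left (hbip : G.IsBipartiteWith (V₁ : Set V) V₂) {k : Finset V ⊕ V}
    (hk : k ∈ V₁.ssubsets.disjSum V₂) {i : V} (hi : i ∈ V₁) :
    hallFunctional G k (Pi.single i 1) = -if i ∈ leftSupport k then 1 else 0 := by
  have hi₂ : i ∉ V₂ := disjoint_left.1 (disjoint_coe.1 hbip.disjoint) hi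
  obtain ⟨A, hA, rfl⟩ | ⟨m, hm, rfl⟩ := mem_disjSum.1 hk
  · have hnbr : i ∉ nbr G A := fun h =>
      hi₂ (nbr_subset_of_isBipartiteWith hbip (mem_ssubsets.1 hA).subset h)
    rw [hallFunctional_inl_apply, sum_pi_single', sum_pi_single', if_neg hnbr, zero_sub]
    rfl
  · rw [hallFunctional_inr_apply, Pi.single_eq_of_ne (ne_of_mem_of_not_mem hm hi₂)]
    simp only [leftSupport, Sum.elim_inr, notMem_empty, if_false, neg_zero]

-- By connectedness `hallFunctional G l - c • hallFunctional G k` takes the same value at all unit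
-- vectors of vertices in `V₁`. Outside `leftSupport k` this value is at most `0`, whereas at a
-- vertex of `leftSupport k` missing from `leftSupport l` it would be `c`.
theorem leftSupport_subset_of_eqOn_smul (hG : G.Preconnected)
    (hbip : G.IsBipartiteWith (V₁ : Set V) V₂) {k l : Finset V ⊕ V}
    (hk : k ∈ V₁.ssubsets.disjSum V₂) (hl : l ∈ V₁.ssubsets.disjSum V₂) {c : ℝ} (hc : 0 < c)
    (h : Set.EqOn (hallFunctional G l) (c • hallFunctional G k) (edgeCone G)) :
    leftSupport k ⊆ leftSupport l := by
  obtain ⟨A, hA, rfl⟩ | ⟨m, -, rfl⟩ := mem_disjSum.1 hk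
  swap
  · exact empty_subset _
  have hAV := (mem_ssubsets.1 hA).subset
  obtain ⟨i₀, hi₀, hi₀A⟩ := exists_of_ssubset (mem_ssubsets.1 hA)
  intro i hi
  by_contra hil
  have hconst := eq_of_forall_adj_add_eq_zero hG hbip (d := fun v =>
    hallFunctional G l (Pi.single v 1) - c * hallFunctional G (Sum.inl A) (Pi.single v 1))
    (fun u v huv => by
      have hedge := h (edgeVector_mem_edgeCone huv)
      simp only [edgeVector_eq_single_add_single, map_add, Pi.smul_apply, smul_eq_mul] at hedge
      linarith) (hAV hi) hi₀
  have hAi : i ∈ leftSupport (Sum.inl A) := hi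
  have hAi₀ : i₀ ∉ leftSupport (Sum.inl A) := hi₀A
  simp only [hallFunctional_single_left hbip hk (hAV hi), hallFunctional_single_left hbip hk hi₀,
    hallFunctional_single_left hbip hl (hAV hi), hallFunctional_single_left hbip hl hi₀, if_pos hAi,
    if_neg hAi₀, if_neg hil] at hconst
  split_ifs at hconst <;> linarith

theorem eq_of_hallFunctional_inr_eqOn_smul (hbip : G.IsBipartiteWith (V₁ : Set V) V₂)
    {i j : V} (hi : i ∈ V₂) (hj : j ∈ V₂) {c : ℝ} (hc : 0 < c)
    (h : Set.EqOn (hallFunctional G (Sum.inr j)) (c • hallFunctional G (Sum.inr i)) (edgeCone G))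
    (hi0 : ¬ Set.EqOn (hallFunctional G (Sum.inr i)) 0 (edgeCone G)) : i = j := by
  have happly {a b m : V} (ha : a ∈ V₁) (hm : m ∈ V₂) :
      edgeVector a b m = if m = b then 1 else 0 := by
    have hma : m ≠ a :=
      ne_of_mem_of_not_mem hm (disjoint_left.1 (disjoint_coe.1 hbip.disjoint) ha)
    rw [edgeVector, if_neg hma, zero_add]
  obtain ⟨a, ha, hai⟩ : ∃ a ∈ V₁, G.Adj a i := by
    by_contra! hiso
    refine hi0 ((eqOn_span_edgeCone (g := 0) fun u v huv => ?_).mono Submodule.subset_span)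
    obtain ⟨a, ha, b, -, hab, heq⟩ := exists_edgeVector_eq_of_isBipartiteWith hbip huv
    have hib : i ≠ b := fun hib => hiso a ha (hib ▸ hab)
    rw [heq, hallFunctional_inr_apply, happly ha hi, if_neg hib, LinearMap.zero_apply]
  have hedge := h (edgeVector_mem_edgeCone hai)
  simp only [Pi.smul_apply, hallFunctional_inr_apply, happly ha hi, happly ha hj, if_true,
    smul_eq_mul, mul_one] at hedge
  by_contra hij
  rw [if_neg (Ne.symm hij)] at hedge
  exact hc.ne hedge

theorem eq_of_hallFunctional_eqOn_smul (hG : G.Preconnected)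
    (hbip : G.IsBipartiteWith (V₁ : Set V) V₂) {k l : Finset V ⊕ V}
    (hk : k ∈ V₁.ssubsets.disjSum V₂) (hl : l ∈ V₁.ssubsets.disjSum V₂) {c : ℝ} (hc : 0 < c)
    (h : Set.EqOn (hallFunctional G l) (c • hallFunctional G k) (edgeCone G))
    (hk0 : ¬ Set.EqOn (hallFunctional G k) 0 (edgeCone G)) : k = l := by
  have h' : Set.EqOn (hallFunctional G k) (c⁻¹ • hallFunctional G l) (edgeCone G) := fun x hx => by
    rw [Pi.smul_apply, h hx, Pi.smul_apply, inv_smul_smul₀ hc.ne']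
  have hkl : leftSupport k = leftSupport l :=
    (leftSupport_subset_of_eqOn_smul hG hbip hk hl hc h).antisymm
      (leftSupport_subset_of_eqOn_smul hG hbip hl hk (inv_pos.2 hc) h')
  have hempty : hallFunctional G (Sum.inl ∅) = 0 := by
    ext; simp [hallFunctional, nbr]
  match k, l with
  | Sum.inl A, Sum.inl B => exact congrArg Sum.inl hkl
  | Sum.inl A, Sum.inr j =>
    obtain rfl : A = ∅ := hkl
    exact (hk0 fun x _ => by rw [hempty]; rfl).elim
  | Sum.inr i, Sum.inl B =>
    obtain rfl : ∅ = B := hkl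
    exact (hk0 fun x hx => by rw [h' hx, hempty, Pi.smul_apply]; exact smul_zero _).elim
  | Sum.inr i, Sum.inr j =>
    exact congrArg Sum.inr (eq_of_hallFunctional_inr_eqOn_smul hbip (inr_mem_disjSum.1 hk)
      (inr_mem_disjSum.1 hl) hc h hk0)

theorem existsUnique_isIrredundantRep_edgeCone (hG : G.Preconnected)
    (hbip : G.IsBipartiteWith (V₁ : Set V) V₂) (hunion : V₁ ∪ V₂ = univ) :
    ∃! S, S ⊆ V₁.ssubsets.disjSum V₂ ∧ IsIrredundantRep (edgeCone G) (hallFunctional G) S :=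
  existsUnique_isIrredundantRep (edgeCone_eq_halfspaceCone hbip hunion)
    fun _ hk _ hl _ hc h hk0 => eq_of_hallFunctional_eqOn_smul hG hbip hk hl hc h hk0

theorem halfspaceCone_disjSum (G : SimpleGraph V) [DecidableRel G.Adj] (P : Finset (Finset V))
    (I : Finset V) :
    halfspaceCone (Submodule.span ℝ (edgeCone G)) (hallFunctional G) (P.disjSum I) =
      (affineSpan ℝ (edgeCone G) : Set (V → ℝ)) ∩
        (⋂ A ∈ P, {x : V → ℝ | ∑ i ∈ A, x i ≤ ∑ i ∈ nbr G A, x i}) ∩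
        (⋂ i ∈ I, {x : V → ℝ | 0 ≤ x i}) := by
  ext x
  simp only [halfspaceCone, coe_affineSpan_edgeCone, Set.mem_ofPred_eq, Set.mem_inter_iff,
    SetLike.mem_coe, Set.mem_iInter, Sum.forall, inl_mem_disjSum, inr_mem_disjSum,
    hallFunctional_inl_apply, hallFunctional_inr_apply, sub_nonneg, and_assoc]

theorem isIrredundantRep_disjSum_iff (G : SimpleGraph V) [DecidableRel G.Adj]
    (P : Finset (Finset V)) (I : Finset V) :
    IsIrredundantRep (edgeCone G) (hallFunctional G) (P.disjSum I) ↔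
      edgeCone G =
        (affineSpan ℝ (edgeCone G) : Set (V → ℝ)) ∩
          (⋂ A ∈ P, {x : V → ℝ | ∑ i ∈ A, x i ≤ ∑ i ∈ nbr G A, x i}) ∩
          (⋂ i ∈ I, {x : V → ℝ | 0 ≤ x i}) ∧
      (∀ A ∈ P, edgeCone G ≠
        (affineSpan ℝ (edgeCone G) : Set (V → ℝ)) ∩
          (⋂ B ∈ P.erase A, {x : V → ℝ | ∑ i ∈ B, x i ≤ ∑ i ∈ nbr G B, x i}) ∩
          (⋂ i ∈ I, {x : V → ℝ | 0 ≤ x i})) ∧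
      (∀ j ∈ I, edgeCone G ≠
        (affineSpan ℝ (edgeCone G) : Set (V → ℝ)) ∩
          (⋂ A ∈ P, {x : V → ℝ | ∑ i ∈ A, x i ≤ ∑ i ∈ nbr G A, x i}) ∩
          (⋂ i ∈ I.erase j, {x : V → ℝ | 0 ≤ x i})) := by
  have herase_inl (A : Finset V) : (P.disjSum I).erase (Sum.inl A) = (P.erase A).disjSum I := by
    ext (B | i) <;> simp
  have herase_inr (j : V) : (P.disjSum I).erase (Sum.inr j) = P.disjSum (I.erase j) := by
    ext (B | i) <;> simp
  constructor
  · rintro ⟨heq, hne⟩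
    refine ⟨heq.trans (halfspaceCone_disjSum G P I), fun A hA => ?_, fun j hj => ?_⟩
    · rw [← halfspaceCone_disjSum, ← herase_inl]
      exact hne _ (inl_mem_disjSum.2 hA)
    · rw [← halfspaceCone_disjSum, ← herase_inr]
      exact hne _ (inr_mem_disjSum.2 hj)
  · rintro ⟨heq, hneA, hnej⟩
    refine ⟨heq.trans (halfspaceCone_disjSum G P I).symm,
      Sum.forall.2 ⟨fun A hA => ?_, fun j hj => ?_⟩⟩
    · rw [herase_inl, halfspaceCone_disjSum]
      exact hneA A (inl_mem_disjSum.1 hA)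
    · rw [herase_inr, halfspaceCone_disjSum]
      exact hnej j (inr_mem_disjSum.1 hj)

end Bipartite

theorem stmt14_general {V : Type*} [Fintype V] [DecidableEq V] (G : SimpleGraph V)
    [DecidableRel G.Adj] (hG : G.Preconnected) {V₁ V₂ : Finset V}
    (hbip : G.IsBipartiteWith (V₁ : Set V) V₂) (hunion : V₁ ∪ V₂ = univ) :
    ∃! p : Finset (Finset V) × Finset V,
      (∀ A ∈ p.1, A ⊆ V₁ ∧ A ≠ V₁) ∧ p.2 ⊆ V₂ ∧
      edgeCone G =
        (affineSpan ℝ (edgeCone G) : Set (V → ℝ)) ∩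
          (⋂ A ∈ p.1, {x : V → ℝ | ∑ i ∈ A, x i ≤ ∑ i ∈ nbr G A, x i}) ∩
          (⋂ i ∈ p.2, {x : V → ℝ | 0 ≤ x i}) ∧
      (∀ A ∈ p.1, edgeCone G ≠
        (affineSpan ℝ (edgeCone G) : Set (V → ℝ)) ∩
          (⋂ B ∈ p.1.erase A, {x : V → ℝ | ∑ i ∈ B, x i ≤ ∑ i ∈ nbr G B, x i}) ∩
          (⋂ i ∈ p.2, {x : V → ℝ | 0 ≤ x i})) ∧
      (∀ j ∈ p.2, edgeCone G ≠
        (affineSpan ℝ (edgeCone G) : Set (V → ℝ)) ∩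
          (⋂ A ∈ p.1, {x : V → ℝ | ∑ i ∈ A, x i ≤ ∑ i ∈ nbr G A, x i}) ∩
          (⋂ i ∈ p.2.erase j, {x : V → ℝ | 0 ≤ x i})) := by
  refine (Finset.sumEquiv.toEquiv.existsUnique_congr' fun p => ?_).1
    (existsUnique_isIrredundantRep_edgeCone hG hbip hunion)
  have hP : p.1 ⊆ V₁.ssubsets ↔ ∀ A ∈ p.1, A ⊆ V₁ ∧ A ≠ V₁ := by
    simp only [subset_iff, mem_ssubsets, ssubset_iff_subset_ne]
  change p.1.disjSum p.2 ⊆ _ ∧ IsIrredundantRep _ _ (p.1.disjSum p.2) ↔ _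
  rw [isIrredundantRep_disjSum_iff, disjSum_subset, toLeft_disjSum, toRight_disjSum, hP, and_assoc]

/-- For a connected bipartite graph `G` with bipartition `(V₁, V₂)` there is a unique
pair consisting of a family of proper subsets of `V₁` and a set of vertices of `V₂`
giving an irreducible representation
`ℝ₊𝒜 = aff(ℝ₊𝒜) ∩ (∩ₖ H_{Aₖ}⁻) ∩ (∩_{i ∈ I} {x | xᵢ ≥ 0})` of the edge cone,
where omitting any single halfspace gives a strictly larger set. -/
theorem stmt14 {n : ℕ} (G : SimpleGraph (Fin n)) [DecidableRel G.Adj]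
    (hG : G.Connected)
    (V₁ V₂ : Finset (Fin n)) (hdisj : Disjoint V₁ V₂)
    (hunion : V₁ ∪ V₂ = Finset.univ)
    (hbip : ∀ i j, G.Adj i j → (i ∈ V₁ ∧ j ∈ V₂) ∨ (i ∈ V₂ ∧ j ∈ V₁)) :
    ∃! p : Finset (Finset (Fin n)) × Finset (Fin n),
      (∀ A ∈ p.1, A ⊆ V₁ ∧ A ≠ V₁) ∧ p.2 ⊆ V₂ ∧
      edgeCone G =
        (affineSpan ℝ (edgeCone G) : Set (Fin n → ℝ)) ∩
          (⋂ A ∈ p.1, {x : Fin n → ℝ | ∑ i ∈ A, x i ≤ ∑ i ∈ nbr G A, x i}) ∩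
          (⋂ i ∈ p.2, {x : Fin n → ℝ | 0 ≤ x i}) ∧
      (∀ A ∈ p.1, edgeCone G ≠
        (affineSpan ℝ (edgeCone G) : Set (Fin n → ℝ)) ∩
          (⋂ B ∈ p.1.erase A, {x : Fin n → ℝ | ∑ i ∈ B, x i ≤ ∑ i ∈ nbr G B, x i}) ∩
          (⋂ i ∈ p.2, {x : Fin n → ℝ | 0 ≤ x i})) ∧
      (∀ j ∈ p.2, edgeCone G ≠
        (affineSpan ℝ (edgeCone G) : Set (Fin n → ℝ)) ∩
          (⋂ A ∈ p.1, {x : Fin n → ℝ | ∑ i ∈ A, x i ≤ ∑ i ∈ nbr G A, x i}) ∩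
          (⋂ i ∈ p.2.erase j, {x : Fin n → ℝ | 0 ≤ x i})) :=
  stmt14_general G hG.preconnected ⟨disjoint_coe.2 hdisj, fun i j => hbip i j⟩ hunion
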